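/- Let V be a finite set of Boolean variables, let T be a finite list of triples (p,q,λ) with p,q ∈ V distinct and λ ∈ (0,1), and for each v ∈ V let u_v : {0,1} → ℝ_{≥0} be a unary constraint with u_v(0) > 0. Define the CSP measure M(σ) = (∏_{(p,q,λ)∈T} g_λ(σ(p),σ(q))) · (∏_{v∈V} u_v(σ(v))), where g_λ = (1,1,λ,1), i.e., g_λ(a,b)=λ if (a,b)=(1,0) and 1 otherwise. Consider the MAX-PROD-FLOW instance whose directed graph has, for each triple (p,q,λ) ∈ T, an edge (q,p) with flow rate ρ = 1/λ ≥ 1, and whose influx rates are w_v = u_v(1)/u_v(0); its measure is F(σ) = (∏_{edges (q,p) with σ(q) ≥ σ(p)} ρ) · (∏_{v : σ(v)=1} w_v). Then for every assignment σ : V → {0,1}, M(σ) = C · F(σ), where C = (∏_{(p,q,λ)∈T} λ) · (∏_{v∈V} u_v(0)) > 0. In particular, the maximum of M over all assignments equals C times the maximum of F over all assignments. -/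

import Mathlib

open scoped NNReal

/-!
Writing `g_λ = λ · (1/λ, 1/λ, 1, 1/λ)` and `u_v = u_v(0) · (1, u_v(1)/u_v(0))` pulls a constant out
of every factor of the CSP measure. What remains of `g_λ` at `(p, q)` is the weight of an edge
`(q, p)` with flow rate `1/λ`: it is `1` exactly when `σ(q) < σ(p)`. What remains of `u_v` is the
weight of a vertex with influx rate `u_v(1)/u_v(0)`.
-/

namespace ProdFlow

variable {V R : Type*}

/-- The binary constraint `g_λ = (1, 1, λ, 1)` of the CSP. -/
def implConstraint [One R] (l : R) (a b : Bool) : R :=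
  if a = true ∧ b = false then l else 1

/-- The contribution to a MAX-PROD-FLOW measure of an edge of flow rate `ρ` that goes from a vertex
of value `a` to a vertex of value `b`. -/
def edgeWeight [One R] (ρ : R) (a b : Bool) : R :=
  if b ≤ a then ρ else 1

/-- The contribution to a MAX-PROD-FLOW measure of a vertex of influx rate `w` and value `a`. -/
def influxWeight [One R] (w : R) (a : Bool) : R :=
  if a then w else 1

/-- The measure of the CSP with a constraint `g_λ` on `(p, q)` for each `(p, q, λ)` in `T` and a
unary constraint `u v` on each variable `v`. -/
def cspMeasure [Fintype V] [CommMonoid R] (T : List (V × V × R)) (u : V → Bool → R)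
    (σ : V → Bool) : R :=
  (T.map fun t => implConstraint t.2.2 (σ t.1) (σ t.2.1)).prod * ∏ v, u v (σ v)

/-- The measure of a MAX-PROD-FLOW instance with influx rates `w`. The graph and its flow rates are
given by the list `E` of triples `(x, y, ρ)`, one for each edge `(x, y)`, so parallel edges are
allowed; the flow rates need not be at least `1`. -/
def flowMeasure [Fintype V] [CommMonoid R] (E : List (V × V × R)) (w : V → R)
    (σ : V → Bool) : R :=
  (E.map fun e => edgeWeight e.2.2 (σ e.1) (σ e.2.1)).prod * ∏ v, influxWeight (w v) (σ v)

/-- The edges and flow rates of the MAX-PROD-FLOW instance of a CSP: each constraint `g_λ` on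
`(p, q)` gives a reversed edge `(q, p)` of flow rate `1/λ`. -/
def flowEdges [Inv R] (T : List (V × V × R)) : List (V × V × R) :=
  T.map fun t => (t.2.1, t.1, t.2.2⁻¹)

/-- The influx rates `u_v(1)/u_v(0)` of the MAX-PROD-FLOW instance of a CSP. -/
def influxRate [Div R] (u : V → Bool → R) (v : V) : R :=
  u v true / u v false

/-- The constant `C = (∏ λ) · (∏ u_v(0))` relating the CSP measure to the MAX-PROD-FLOW measure. -/
def scale [Fintype V] [CommMonoid R] (T : List (V × V × R)) (u : V → Bool → R) : R :=
  (T.map fun t => t.2.2).prod * ∏ v, u v false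

theorem flowMeasure_flowEdges [Fintype V] [CommMonoid R] [Inv R] (T : List (V × V × R))
    (w : V → R) :
    flowMeasure (flowEdges T) w = fun σ =>
      (T.map fun t => edgeWeight t.2.2⁻¹ (σ t.2.1) (σ t.1)).prod *
        ∏ v, influxWeight (w v) (σ v) := by
  funext σ
  simp only [flowMeasure, flowEdges, List.map_map, Function.comp_def]

theorem implConstraint_eq_mul_edgeWeight [GroupWithZero R] {l : R} (hl : l ≠ 0) (a b : Bool) :
    implConstraint l a b = l * edgeWeight l⁻¹ b a := by
  cases a <;> cases b <;> simp [implConstraint, edgeWeight, hl]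

section CommGroupWithZero

variable [CommGroupWithZero R] {T : List (V × V × R)} {u : V → Bool → R}

theorem apply_eq_mul_influxWeight_influxRate {v : V} (hv : u v false ≠ 0) (a : Bool) :
    u v a = u v false * influxWeight (influxRate u v) a := by
  cases a <;> simp [influxWeight, influxRate, mul_div_cancel₀, hv]

theorem prod_implConstraint_eq_mul_prod_edgeWeight (hT : ∀ t ∈ T, t.2.2 ≠ 0) (σ : V → Bool) :
    (T.map fun t => implConstraint t.2.2 (σ t.1) (σ t.2.1)).prod =
      (T.map fun t => t.2.2).prod *
        (T.map fun t => edgeWeight t.2.2⁻¹ (σ t.2.1) (σ t.1)).prod := by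
  rw [← List.prod_map_mul]
  exact congrArg List.prod <| List.map_congr_left fun t ht =>
    implConstraint_eq_mul_edgeWeight (hT t ht) _ _

variable [Fintype V]

theorem prod_apply_eq_mul_prod_influxWeight (hu : ∀ v, u v false ≠ 0) (σ : V → Bool) :
    ∏ v, u v (σ v) = (∏ v, u v false) * ∏ v, influxWeight (influxRate u v) (σ v) := by
  rw [← Finset.prod_mul_distrib]
  exact Finset.prod_congr rfl fun v _ => apply_eq_mul_influxWeight_influxRate (hu v) (σ v)

theorem cspMeasure_eq_scale_mul_flowMeasure (hT : ∀ t ∈ T, t.2.2 ≠ 0)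
    (hu : ∀ v, u v false ≠ 0) (σ : V → Bool) :
    cspMeasure T u σ = scale T u * flowMeasure (flowEdges T) (influxRate u) σ := by
  rw [cspMeasure, prod_implConstraint_eq_mul_prod_edgeWeight hT,
    prod_apply_eq_mul_prod_influxWeight hu, flowMeasure_flowEdges]
  exact mul_mul_mul_comm _ _ _ _

theorem scale_ne_zero (hT : ∀ t ∈ T, t.2.2 ≠ 0) (hu : ∀ v, u v false ≠ 0) :
    scale T u ≠ 0 := by
  refine mul_ne_zero (List.prod_ne_zero fun h => ?_) (Finset.prod_ne_zero_iff.2 fun v _ => hu v)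
  obtain ⟨t, ht, ht0⟩ := List.mem_map.1 h
  exact hT t ht ht0

end CommGroupWithZero

section LinearOrderedCommGroupWithZero

variable [LinearOrderedCommGroupWithZero R] [Fintype V] {T : List (V × V × R)} {u : V → Bool → R}

theorem scale_pos (hT : ∀ t ∈ T, 0 < t.2.2) (hu : ∀ v, 0 < u v false) : 0 < scale T u :=
  zero_lt_iff.2 <| scale_ne_zero (fun t ht => (hT t ht).ne') fun v => (hu v).ne'

theorem sup_cspMeasure_eq_scale_mul_sup_flowMeasure (hT : ∀ t ∈ T, 0 < t.2.2)
    (hu : ∀ v, 0 < u v false) (s : Finset (V → Bool)) :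
    s.sup (cspMeasure T u) = scale T u * s.sup (flowMeasure (flowEdges T) (influxRate u)) :=
  calc s.sup (cspMeasure T u)
      = s.sup fun σ => scale T u * flowMeasure (flowEdges T) (influxRate u) σ :=
        Finset.sup_congr rfl fun σ _ => cspMeasure_eq_scale_mul_flowMeasure
          (fun t ht => (hT t ht).ne') (fun v => (hu v).ne') σ
    _ = scale T u * s.sup (flowMeasure (flowEdges T) (influxRate u)) :=
        (map_finset_sup (OrderIso.mulLeft₀ _ (scale_pos hT hu)) s _).symm

end LinearOrderedCommGroupWithZero

end ProdFlow

open ProdFlow in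
theorem stmt3_general {V R : Type*} [Fintype V] [DecidableEq V] [LinearOrderedCommGroupWithZero R]
    (T : List (V × V × R)) (hT : ∀ t ∈ T, 0 < t.2.2) (u : V → Bool → R)
    (hu : ∀ v, 0 < u v false) :
    0 < scale T u ∧
      (∀ σ, cspMeasure T u σ = scale T u * flowMeasure (flowEdges T) (influxRate u) σ) ∧
      Finset.univ.sup (cspMeasure T u) =
        scale T u * Finset.univ.sup (flowMeasure (flowEdges T) (influxRate u)) :=
  ⟨scale_pos hT hu,
    cspMeasure_eq_scale_mul_flowMeasure (fun t ht => (hT t ht).ne') fun v => (hu v).ne',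
    sup_cspMeasure_eq_scale_mul_sup_flowMeasure hT hu Finset.univ⟩

/-- A multiplicatively-measured CSP whose binary constraints are of the
form `g_λ = (1,1,λ,1)` with `λ ∈ (0,1)` (listed in `T` as triples `(p,q,λ)`) and whose unary
constraints `u_v` satisfy `u_v(0) > 0` has measure `M(σ)` equal to `C · F(σ)`, where `F` is
the measure of the MAX-PROD-FLOW instance with an edge `(q,p)` of flow rate `1/λ ≥ 1` for
each triple `(p,q,λ)`, influx rates `w_v = u_v(1)/u_v(0)`, and
`C = (∏_{(p,q,λ)∈T} λ) · (∏_v u_v(0)) > 0`.  In particular the maxima of `M` and of `C · F`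
over all assignments coincide. -/
theorem stmt3 {V : Type} [Fintype V] [DecidableEq V] (T : List (V × V × ℝ≥0))
    (hT : ∀ t ∈ T, t.1 ≠ t.2.1 ∧ 0 < t.2.2 ∧ t.2.2 < 1)
    (u : V → Bool → ℝ≥0) (hu : ∀ v, 0 < u v false) :
    -- the CSP measure
    let M : (V → Bool) → ℝ≥0 := fun σ =>
      (T.map fun t => if σ t.1 = true ∧ σ t.2.1 = false then t.2.2 else 1).prod *
        ∏ v : V, u v (σ v)
    -- the MAX-PROD-FLOW measure: edge (q,p) with rate 1/λ counted when σ q ≥ σ p,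
    -- influx rate u_v(1)/u_v(0) counted when σ v = 1
    let F : (V → Bool) → ℝ≥0 := fun σ =>
      (T.map fun t => if σ t.1 ≤ σ t.2.1 then (t.2.2)⁻¹ else 1).prod *
        ∏ v : V, (if σ v then u v true / u v false else 1)
    let C : ℝ≥0 := (T.map fun t => t.2.2).prod * ∏ v : V, u v false
    0 < C ∧ (∀ σ : V → Bool, M σ = C * F σ) ∧
      Finset.univ.sup M = C * Finset.univ.sup F := by
  simpa only [ProdFlow.flowMeasure_flowEdges] using!
    stmt3_general T (fun t ht => (hT t ht).2.1) u hu
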